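/- arXiv:1608.05448 — 2 statements merged into one kernel-verified Lean document; each statement's English description precedes it below -/
import Mathlib

section
/- There is an absolute constant c₁ > 0 such that for every odd prime p and every subset A ⊆ F_p with |A| = δp where δ > c₁ · p^(−1/15), there exist x ∈ A and y ∈ F_p with y ≠ 0 such that x ∈ A, x + y ∈ A, and x + y² ∈ A. -/
open Finset

section Roth

variable {F : Type} [Field F] [Fintype F] [DecidableEq F]

lemma aux_cs {ι : Type*} (S : Finset ι) (u v : ι → ℂ) :
    ‖∑ i ∈ S, u i * v i‖ ^ 2 ≤ (∑ i ∈ S, ‖u i‖ ^ 2) * ∑ i ∈ S, ‖v i‖ ^ 2 := by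
  have h1 : ‖∑ i ∈ S, u i * v i‖ ≤ ∑ i ∈ S, ‖u i‖ * ‖v i‖ :=
    (norm_sum_le _ _).trans (le_of_eq (Finset.sum_congr rfl fun i _ => norm_mul _ _))
  calc _ ≤ (∑ i ∈ S, ‖u i‖ * ‖v i‖) ^ 2 := by gcongr
    _ ≤ _ := Finset.sum_mul_sq_le_sq_mul_sq _ _ _

lemma aux_sq (z : ℂ) : ((‖z‖ ^ 2 : ℝ) : ℂ) = z * (starRingEnd ℂ) z := by
  rw [Complex.mul_conj, Complex.normSq_eq_norm_sq]

lemma aux_orth (ψ : AddChar F ℂ) (hψ : ψ.IsPrimitive) (b : F) :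
    ∑ m, ψ (m * b) = if b = 0 then (Fintype.card F : ℂ) else 0 := by
  have := AddChar.sum_mulShift b hψ
  rw [this]; split_ifs <;> simp

lemma aux_pars (ψ : AddChar F ℂ) (hψ : ψ.IsPrimitive) {ι : Type*} (S : Finset ι)
    (w : ι → ℂ) (θ : ι → F) :
    ((∑ m, ‖∑ s ∈ S, w s * ψ (m * θ s)‖ ^ 2 : ℝ) : ℂ) =
      (Fintype.card F : ℂ) *
        ∑ s ∈ S, ∑ t ∈ S, if θ s = θ t then w s * (starRingEnd ℂ) (w t) else 0 := by
  rw [Complex.ofReal_sum]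
  simp_rw [aux_sq, map_sum, Finset.sum_mul_sum]
  rw [Finset.sum_comm, Finset.mul_sum]
  refine Finset.sum_congr rfl fun s _ => ?_
  rw [Finset.sum_comm, Finset.mul_sum]
  refine Finset.sum_congr rfl fun t _ => ?_
  have : ∀ m, w s * ψ (m * θ s) * (starRingEnd ℂ) (w t * ψ (m * θ t)) =
      w s * (starRingEnd ℂ) (w t) * ψ (m * (θ s - θ t)) := by
    intro m
    rw [map_mul (starRingEnd ℂ), ← AddChar.map_neg_eq_conj, mul_sub, sub_eq_add_neg, AddChar.map_add_eq_mul]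
    ring
  simp_rw [this, ← Finset.mul_sum, aux_orth ψ hψ, sub_eq_zero]
  split_ifs <;> ring

lemma aux_moment (ψ : AddChar F ℂ) (hψ : ψ.IsPrimitive) (l : F) :
    ∑ m, ‖∑ s ∈ univ.filter (fun s : F => s ≠ 0 ∧ s ≠ 1), ψ (-(m * s + (m - l) / s))‖ ^ 2 ≤
      2 * (Fintype.card F : ℝ) ^ 2 := by
  set S := univ.filter (fun s : F => s ≠ 0 ∧ s ≠ 1) with hS
  have h1 : ∀ m, ∑ s ∈ S, ψ (-(m * s + (m - l) / s)) =
      ∑ s ∈ S, ψ (l / s) * ψ (m * (-(s + s⁻¹))) := by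
    intro m
    refine Finset.sum_congr rfl fun s _ => ?_
    rw [← AddChar.map_add_eq_mul]
    congr 1
    ring
  simp_rw [h1]
  have h2 := aux_pars ψ hψ S (fun s => ψ (l / s)) (fun s => -(s + s⁻¹))
  have h3 := congrArg (fun z : ℂ => ‖z‖) h2
  simp only [Complex.norm_real, norm_mul, Complex.norm_natCast] at h3
  rw [Real.norm_of_nonneg (by positivity)] at h3
  rw [h3]
  have h4 : ‖∑ s ∈ S, ∑ t ∈ S, if -(s + s⁻¹) = -(t + t⁻¹) then
      ψ (l / s) * (starRingEnd ℂ) (ψ (l / t)) else 0‖ ≤ ∑ s : F, (2 : ℝ) := by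
    refine (norm_sum_le _ _).trans ?_
    refine (Finset.sum_le_sum fun s hs => ?_).trans
      (Finset.sum_le_sum_of_subset_of_nonneg (Finset.subset_univ S) (by intros; norm_num))
    refine (norm_sum_le _ _).trans ?_
    have h5 : ∀ t ∈ S, ‖if -(s + s⁻¹) = -(t + t⁻¹) then
        ψ (l / s) * (starRingEnd ℂ) (ψ (l / t)) else 0‖ ≤
        (if t = s then (1 : ℝ) else 0) + (if t = s⁻¹ then (1 : ℝ) else 0) := by
      intro t ht
      have hs0 : s ≠ 0 := by simp [hS] at hs; exact hs.1
      have ht0 : t ≠ 0 := by simp [hS] at ht; exact ht.1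
      split_ifs with a b c c b c c
      all_goals try simp
      have a' : s + s⁻¹ = t + t⁻¹ := neg_injective a
      have e : (t - s) * (t * s - 1) = 0 := by
        field_simp at a'
        linear_combination -a'
      rcases mul_eq_zero.1 e with e | e
      · exact (b (sub_eq_zero.1 e)).elim
      · exact (c (eq_inv_of_mul_eq_one_left (sub_eq_zero.1 e))).elim
    refine (Finset.sum_le_sum h5).trans ?_
    rw [Finset.sum_add_distrib, Finset.sum_ite_eq', Finset.sum_ite_eq']
    split_ifs <;> norm_num
  rw [Finset.sum_const, Finset.card_univ, nsmul_eq_mul] at h4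
  nlinarith [(Nat.cast_nonneg (Fintype.card F) : (0 : ℝ) ≤ _)]

lemma aux_hs (M : F → F → ℂ) (u v : F → ℂ) :
    ‖∑ a, ∑ c, u a * v c * M a c‖ ^ 4 ≤ (∑ a, ‖u a‖ ^ 2) ^ 2 * (∑ c, ‖v c‖ ^ 2) ^ 2 *
      ∑ a, ∑ b, ‖∑ c, M a c * (starRingEnd ℂ) (M b c)‖ ^ 2 := by
  set w : F → ℂ := fun c => ∑ a, u a * M a c with hw
  have h1 : ∑ a, ∑ c, u a * v c * M a c = ∑ c, v c * w c := by
    rw [Finset.sum_comm]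
    refine Finset.sum_congr rfl fun c _ => ?_
    rw [hw, Finset.mul_sum]
    exact Finset.sum_congr rfl fun a _ => by ring
  have h2 := aux_cs univ v w
  have h3 : ((∑ c, ‖w c‖ ^ 2 : ℝ) : ℂ) = ∑ x : F × F, (u x.1 * (starRingEnd ℂ) (u x.2)) *
      ∑ c, M x.1 c * (starRingEnd ℂ) (M x.2 c) := by
    rw [Complex.ofReal_sum]
    simp_rw [aux_sq, hw, map_sum, Finset.sum_mul_sum]
    rw [Fintype.sum_prod_type, Finset.sum_comm]
    refine Finset.sum_congr rfl fun s _ => ?_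
    rw [Finset.sum_comm]
    refine Finset.sum_congr rfl fun t _ => ?_
    rw [Finset.mul_sum]
    refine Finset.sum_congr rfl fun c _ => ?_
    rw [map_mul]; ring
  have h4 := aux_cs univ (fun x : F × F => u x.1 * (starRingEnd ℂ) (u x.2))
    (fun x => ∑ c, M x.1 c * (starRingEnd ℂ) (M x.2 c))
  rw [← h3, Complex.norm_real, Real.norm_of_nonneg (by positivity)] at h4
  have h5 : ∑ x : F × F, ‖u x.1 * (starRingEnd ℂ) (u x.2)‖ ^ 2 = (∑ a, ‖u a‖ ^ 2) ^ 2 := by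
    rw [Fintype.sum_prod_type, sq (∑ a, ‖u a‖ ^ 2), Finset.sum_mul_sum]
    simp [mul_pow]
  rw [h5, Fintype.sum_prod_type] at h4
  rw [h1]
  calc ‖∑ c, v c * w c‖ ^ 4 = (‖∑ c, v c * w c‖ ^ 2) ^ 2 := by ring
    _ ≤ ((∑ c, ‖v c‖ ^ 2) * ∑ c, ‖w c‖ ^ 2) ^ 2 := by gcongr
    _ = (∑ c, ‖v c‖ ^ 2) ^ 2 * (∑ c, ‖w c‖ ^ 2) ^ 2 := by ring
    _ ≤ (∑ c, ‖v c‖ ^ 2) ^ 2 * _ := mul_le_mul_of_nonneg_left h4 (by positivity)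
    _ = _ := by ring

/-- the linear phase -/
def aux_al (d a : F) : F := (2 * a * d + d ^ 2) / 4

/-- the kernel -/
noncomputable def aux_M (ψ : AddChar F ℂ) (d a c : F) : ℂ :=
  if c = a then 0 else ψ (-(aux_al d a / (c - a)))

lemma aux_M_norm (ψ : AddChar F ℂ) (d a c : F) : ‖aux_M ψ d a c‖ ≤ 1 := by
  unfold aux_M; split_ifs <;> simp

lemma aux_kernel (ψ : AddChar F ℂ) (h2 : (2 : F) ≠ 0) (d a b : F) (hab : a ≠ b) :
    ‖∑ c, aux_M ψ d a c * (starRingEnd ℂ) (aux_M ψ d b c)‖ =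
    ‖∑ s ∈ univ.filter (fun s : F => s ≠ 0 ∧ s ≠ 1),
      ψ (-(aux_al d a / (a - b) * s + (aux_al d a / (a - b) - d / 2) / s))‖ := by
  have hh : a - b ≠ 0 := sub_ne_zero.2 hab
  have h4 : (4 : F) ≠ 0 := by
    have : (4 : F) = 2 * 2 := by norm_num
    rw [this]; exact mul_ne_zero h2 h2
  have h1 : ∑ c, aux_M ψ d a c * (starRingEnd ℂ) (aux_M ψ d b c) =
      ∑ c ∈ univ.filter (fun c : F => c ≠ b ∧ c ≠ a),
        aux_M ψ d a c * (starRingEnd ℂ) (aux_M ψ d b c) := by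
    symm
    apply Finset.sum_subset (Finset.subset_univ _)
    intro c _ hc
    have : c = b ∨ c = a := by
      by_contra! h; exact hc (by simp [h])
    rcases this with rfl | rfl <;> simp [aux_M]
  have h3 : ∑ c ∈ univ.filter (fun c : F => c ≠ b ∧ c ≠ a),
        aux_M ψ d a c * (starRingEnd ℂ) (aux_M ψ d b c) =
      ∑ s ∈ univ.filter (fun s : F => s ≠ 0 ∧ s ≠ 1), ψ ((aux_al d a + aux_al d b) / (a - b)) *
        ψ (-(aux_al d a / (a - b) * s + (aux_al d a / (a - b) - d / 2) / s)) := by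
    refine Finset.sum_bij' (fun c _ => (c - b) / (c - a)) (fun s _ => a + (a - b) / (s - 1))
      ?_ ?_ ?_ ?_ ?_
    · intro c hc
      simp only [mem_filter, mem_univ, true_and] at hc ⊢
      have hb := sub_ne_zero.2 hc.1
      have ha := sub_ne_zero.2 hc.2
      refine ⟨div_ne_zero hb ha, ?_⟩
      rw [Ne, div_eq_one_iff_eq ha]
      intro h
      exact hab (by linear_combination h)
    · intro s hs
      simp only [mem_filter, mem_univ, true_and] at hs ⊢
      have h1 := sub_ne_zero.2 hs.2
      constructor
      · intro h
        field_simp at h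
        have : (a - b) * s = 0 := by linear_combination h
        rcases mul_eq_zero.1 this with h | h
        · exact hh h
        · exact hs.1 h
      · intro h
        have : (a - b) / (s - 1) = 0 := by linear_combination h
        exact div_ne_zero hh h1 this
    · intro c hc
      simp only [mem_filter, mem_univ, true_and] at hc
      have ha := sub_ne_zero.2 hc.2
      have : (c - b) / (c - a) - 1 = (a - b) / (c - a) := by field_simp; ring
      rw [this]; field_simp; ring
    · intro s hs
      simp only [mem_filter, mem_univ, true_and] at hs
      have h1 := sub_ne_zero.2 hs.2
      have e1 : a + (a - b) / (s - 1) - b = (a - b) * s / (s - 1) := by field_simp; ring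
      have e2 : a + (a - b) / (s - 1) - a = (a - b) / (s - 1) := by ring
      rw [e1, e2]; field_simp
    · intro c hc
      simp only [mem_filter, mem_univ, true_and] at hc
      have hb := sub_ne_zero.2 hc.1
      have ha := sub_ne_zero.2 hc.2
      rw [aux_M, aux_M, if_neg hc.1, if_neg hc.2, ← AddChar.map_neg_eq_conj,
        ← AddChar.map_add_eq_mul, ← AddChar.map_add_eq_mul]
      congr 1
      unfold aux_al
      field_simp
      ring
  rw [h1, h3, ← Finset.mul_sum, norm_mul]
  simp

lemma aux_N (ψ : AddChar F ℂ) (hψ : ψ.IsPrimitive) (h2 : (2 : F) ≠ 0) (d : F) (hd : d ≠ 0) :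
    ∑ a, ∑ b, ‖∑ c, aux_M ψ d a c * (starRingEnd ℂ) (aux_M ψ d b c)‖ ^ 2 ≤
      3 * (Fintype.card F : ℝ) ^ 3 := by
  set q : ℝ := (Fintype.card F : ℝ) with hq
  have hq0 : 0 ≤ q := Nat.cast_nonneg _
  have h4 : (4 : F) ≠ 0 := by
    have : (4 : F) = 2 * 2 := by norm_num
    rw [this]; exact mul_ne_zero h2 h2
  set N : F → F → ℝ := fun a b => ‖∑ c, aux_M ψ d a c * (starRingEnd ℂ) (aux_M ψ d b c)‖ ^ 2
    with hN
  have e1 : ∑ a, ∑ b, N a b = ∑ h, ∑ a, N a (a - h) := by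
    rw [Finset.sum_comm (f := fun h a => N a (a - h))]
    exact Finset.sum_congr rfl fun a _ => (Equiv.sum_comp (Equiv.subLeft a) (N a)).symm
  have e2 : ∑ a, N a (a - 0) ≤ q ^ 3 := by
    have : ∀ a ∈ (univ : Finset F), N a (a - 0) ≤ q ^ 2 := by
      intro a _
      simp only [hN]
      gcongr
      refine (norm_sum_le _ _).trans ?_
      have : ∀ c ∈ (univ : Finset F), ‖aux_M ψ d a c * (starRingEnd ℂ) (aux_M ψ d (a - 0) c)‖ ≤ 1 := by
        intro c _
        rw [norm_mul, RCLike.norm_conj]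
        exact mul_le_one₀ (aux_M_norm _ _ _ _) (norm_nonneg _) (aux_M_norm _ _ _ _)
      refine (Finset.sum_le_sum this).trans ?_
      simp [hq]
    refine (Finset.sum_le_sum this).trans ?_
    rw [Finset.sum_const, Finset.card_univ, nsmul_eq_mul, ← hq]
    apply le_of_eq; ring
  have e3 : ∀ h ∈ univ.erase (0 : F), ∑ a, N a (a - h) ≤ 2 * q ^ 2 := by
    intro h hh
    have hh0 : h ≠ 0 := Finset.ne_of_mem_erase hh
    refine le_trans (le_of_eq ?_) (aux_moment ψ hψ (d / 2))
    have hbij : Function.Bijective (fun a : F => aux_al d a / h) := by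
      apply Function.Injective.bijective_of_finite
      intro x y hxy
      simp only [aux_al] at hxy
      field_simp at hxy
      have : (x - y) * (2 * d) = 0 := by linear_combination d * hxy
      rcases mul_eq_zero.1 this with e | e
      · exact sub_eq_zero.1 e
      · exact absurd e (mul_ne_zero h2 hd)
    refine Fintype.sum_bijective _ hbij _ _ fun a => ?_
    simp only [hN]
    rw [aux_kernel ψ h2 d a (a - h) (by intro e; apply hh0; linear_combination e)]
    rw [sub_sub_cancel]
  rw [e1, ← Finset.add_sum_erase univ _ (Finset.mem_univ (0 : F))]
  have e4 := Finset.sum_le_sum e3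
  have e5 : ∑ h ∈ univ.erase (0 : F), 2 * q ^ 2 ≤ ∑ h : F, 2 * q ^ 2 :=
    Finset.sum_le_sum_of_subset_of_nonneg (Finset.subset_univ _) (by intros; positivity)
  rw [Finset.sum_const, Finset.sum_const, Finset.card_univ, nsmul_eq_mul, nsmul_eq_mul, ← hq] at e5
  rw [Finset.sum_const, nsmul_eq_mul] at e4
  nlinarith

lemma aux_op (ψ : AddChar F ℂ) (hψ : ψ.IsPrimitive) (h2 : (2 : F) ≠ 0) (d : F) (hd : d ≠ 0)
    (B : ℝ) (hB : 0 ≤ B) (hB4 : B ^ 4 = 3 * (Fintype.card F : ℝ) ^ 3) (u v : F → ℂ) :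
    ‖∑ a, ∑ c, u a * v c * aux_M ψ d a c‖ ≤
      B * ((∑ a, ‖u a‖ ^ 2) + ∑ a, ‖v a‖ ^ 2) / 2 := by
  have h := aux_hs (aux_M ψ d) u v
  have hN := aux_N ψ hψ h2 d hd
  set U := ∑ a, ‖u a‖ ^ 2
  set V := ∑ a, ‖v a‖ ^ 2
  have hU : 0 ≤ U := by positivity
  have hV : 0 ≤ V := by positivity
  rw [← hB4] at hN
  refine le_of_pow_le_pow_left₀ (n := 4) (by norm_num) (by positivity) ?_
  have h3 : U * V ≤ ((U + V) / 2) ^ 2 := by nlinarith [sq_nonneg (U - V)]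
  calc _ ≤ U ^ 2 * V ^ 2 * _ := h
    _ ≤ U ^ 2 * V ^ 2 * B ^ 4 := by gcongr
    _ = (U * V) ^ 2 * B ^ 4 := by ring
    _ ≤ (((U + V) / 2) ^ 2) ^ 2 * B ^ 4 := by gcongr
    _ = _ := by ring

lemma aux_shift (P : F → ℝ) : ∑ d, ∑ a, P a * P (a + d) = (∑ a, P a) ^ 2 := by
  rw [Finset.sum_comm, sq, Finset.sum_mul]
  refine Finset.sum_congr rfl fun a _ => ?_
  rw [← Finset.mul_sum]
  congr 1
  exact Equiv.sum_comp (Equiv.addLeft a) P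

lemma aux_Q (ψ : AddChar F ℂ) (hψ : ψ.IsPrimitive) (h2 : (2 : F) ≠ 0)
    (B : ℝ) (hB : 0 ≤ B) (hB4 : B ^ 4 = 3 * (Fintype.card F : ℝ) ^ 3) (P R : F → ℂ) (L : ℝ)
    (hP : ∑ a, ‖P a‖ ^ 2 = L) (hR : ∑ a, ‖R a‖ ^ 2 = L) :
    ∑ b ∈ univ.erase (0 : F), ‖∑ a, P a * R (a + b) * ψ (a ^ 2 / (4 * b))‖ ^ 2 ≤
      (1 + B) * L ^ 2 := by
  have h4 : (4 : F) ≠ 0 := by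
    have : (4 : F) = 2 * 2 := by norm_num
    rw [this]; exact mul_ne_zero h2 h2
  set X : F → ℂ := fun d => ∑ a, ∑ c, (P a * (starRingEnd ℂ) (P (a + d))) *
    (R c * (starRingEnd ℂ) (R (c + d))) * aux_M ψ d a c with hX
  have key : ((∑ b ∈ univ.erase (0 : F),
      ‖∑ a, P a * R (a + b) * ψ (a ^ 2 / (4 * b))‖ ^ 2 : ℝ) : ℂ) = ∑ d, X d := by
    rw [Complex.ofReal_sum]
    simp_rw [aux_sq, map_sum, Finset.sum_mul_sum]
    have e0 : ∀ b a : F, ∑ t, P a * R (a + b) * ψ (a ^ 2 / (4 * b)) *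
        (starRingEnd ℂ) (P t * R (t + b) * ψ (t ^ 2 / (4 * b))) =
        ∑ d, P a * R (a + b) * ψ (a ^ 2 / (4 * b)) *
        (starRingEnd ℂ) (P (a + d) * R (a + d + b) * ψ ((a + d) ^ 2 / (4 * b))) := by
      intro b a
      exact (Equiv.sum_comp (Equiv.addLeft a) (fun t => P a * R (a + b) * ψ (a ^ 2 / (4 * b)) *
        (starRingEnd ℂ) (P t * R (t + b) * ψ (t ^ 2 / (4 * b))))).symm
    simp_rw [e0]
    simp only [hX]
    rw [Finset.sum_comm, Finset.sum_comm (s := (univ : Finset F)) (t := (univ : Finset F))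
      (f := fun d a => ∑ c, (P a * (starRingEnd ℂ) (P (a + d))) *
    (R c * (starRingEnd ℂ) (R (c + d))) * aux_M ψ d a c)]
    refine Finset.sum_congr rfl fun a _ => ?_
    rw [Finset.sum_comm]
    refine Finset.sum_congr rfl fun d _ => ?_
    rw [← Equiv.sum_comp (Equiv.addLeft a) (fun c => (P a * (starRingEnd ℂ) (P (a + d))) *
    (R c * (starRingEnd ℂ) (R (c + d))) * aux_M ψ d a c)]
    simp only [Equiv.coe_addLeft]
    rw [← Finset.add_sum_erase univ _ (Finset.mem_univ (0 : F))]
    simp only [add_zero]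
    have : aux_M ψ d a a = 0 := by simp [aux_M]
    rw [this, mul_zero, zero_add]
    refine Finset.sum_congr rfl fun b hb => ?_
    have hb0 : b ≠ 0 := Finset.ne_of_mem_erase hb
    have e1 : aux_M ψ d a (a + b) =
        ψ (a ^ 2 / (4 * b)) * (starRingEnd ℂ) (ψ ((a + d) ^ 2 / (4 * b))) := by
      rw [← AddChar.map_neg_eq_conj, ← AddChar.map_add_eq_mul, aux_M, if_neg (by simpa using hb0)]
      congr 1
      unfold aux_al
      rw [add_sub_cancel_left]
      field_simp
      ring
    rw [e1, map_mul, map_mul, show a + d + b = a + b + d by ring]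
    ring
  have hn := congrArg (fun z : ℂ => ‖z‖) key
  simp only [Complex.norm_real] at hn
  rw [Real.norm_of_nonneg (by positivity)] at hn
  rw [hn]
  have hX0 : ‖X 0‖ ≤ L ^ 2 := by
    simp only [hX, add_zero]
    refine (norm_sum_le _ _).trans ?_
    calc _ ≤ ∑ a, ∑ c, ‖P a‖ ^ 2 * ‖R c‖ ^ 2 := by
          refine Finset.sum_le_sum fun a _ => (norm_sum_le _ _).trans ?_
          refine Finset.sum_le_sum fun c _ => ?_
          simp only [norm_mul, RCLike.norm_conj]
          have := aux_M_norm ψ 0 a c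
          calc _ ≤ ‖P a‖ * ‖P a‖ * (‖R c‖ * ‖R c‖) * 1 := by gcongr
            _ = _ := by ring
      _ = L ^ 2 := by rw [← Finset.sum_mul_sum, hP, hR]; ring
  have hXd : ∀ d ∈ univ.erase (0 : F), ‖X d‖ ≤
      B / 2 * (∑ a, ‖P a‖ ^ 2 * ‖P (a + d)‖ ^ 2 + ∑ a, ‖R a‖ ^ 2 * ‖R (a + d)‖ ^ 2) := by
    intro d hd
    have := aux_op ψ hψ h2 d (Finset.ne_of_mem_erase hd) B hB hB4
      (fun a => P a * (starRingEnd ℂ) (P (a + d))) (fun c => R c * (starRingEnd ℂ) (R (c + d)))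
    simp only [norm_mul, RCLike.norm_conj, mul_pow] at this
    refine this.trans (le_of_eq (by ring))
  calc ‖∑ d, X d‖ ≤ ∑ d, ‖X d‖ := norm_sum_le _ _
    _ = ‖X 0‖ + ∑ d ∈ univ.erase (0 : F), ‖X d‖ :=
        (Finset.add_sum_erase univ _ (Finset.mem_univ (0 : F))).symm
    _ ≤ L ^ 2 + ∑ d ∈ univ.erase (0 : F), B / 2 *
      (∑ a, ‖P a‖ ^ 2 * ‖P (a + d)‖ ^ 2 + ∑ a, ‖R a‖ ^ 2 * ‖R (a + d)‖ ^ 2) :=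
        add_le_add hX0 (Finset.sum_le_sum hXd)
    _ ≤ L ^ 2 + ∑ d, B / 2 *
      (∑ a, ‖P a‖ ^ 2 * ‖P (a + d)‖ ^ 2 + ∑ a, ‖R a‖ ^ 2 * ‖R (a + d)‖ ^ 2) := by
        gcongr
        exact Finset.subset_univ _
    _ = (1 + B) * L ^ 2 := by
        rw [← Finset.mul_sum, Finset.sum_add_distrib, aux_shift (fun a => ‖P a‖ ^ 2),
          aux_shift (fun a => ‖R a‖ ^ 2), hP, hR]
        ring

lemma aux_gauss (ψ : AddChar F ℂ) (hψ : ψ.IsPrimitive) (h2 : (2 : F) ≠ 0) (b : F) (hb : b ≠ 0) :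
    ‖∑ y, ψ (-(b * y ^ 2))‖ ^ 2 = (Fintype.card F : ℝ) := by
  have : ((‖∑ y, ψ (-(b * y ^ 2))‖ ^ 2 : ℝ) : ℂ) = (Fintype.card F : ℂ) := by
    rw [aux_sq, map_sum, Finset.sum_mul_sum]
    have e : ∀ y : F, ∑ z, ψ (-(b * y ^ 2)) * (starRingEnd ℂ) (ψ (-(b * z ^ 2))) =
        ∑ k, ψ (b * k ^ 2) * ψ (y * (2 * b * k)) := by
      intro y
      rw [← Equiv.sum_comp (Equiv.addLeft y)]
      refine Finset.sum_congr rfl fun k _ => ?_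
      rw [← AddChar.map_neg_eq_conj, ← AddChar.map_add_eq_mul, ← AddChar.map_add_eq_mul]
      congr 1
      simp only [Equiv.coe_addLeft]
      ring
    simp_rw [e]
    rw [Finset.sum_comm]
    simp_rw [← Finset.mul_sum, aux_orth ψ hψ]
    rw [Finset.sum_eq_single 0]
    · simp
    · intro k _ hk
      rw [if_neg (mul_ne_zero (mul_ne_zero h2 hb) hk), mul_zero]
    · simp
  exact_mod_cast this

lemma aux_G (ψ : AddChar F ℂ) (h2 : (2 : F) ≠ 0) (a b : F) (hb : b ≠ 0) :
    ∑ y, ψ (-(a * y + b * y ^ 2)) = ψ (a ^ 2 / (4 * b)) * ∑ y, ψ (-(b * y ^ 2)) := by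
  have h4 : (4 : F) ≠ 0 := by
    have : (4 : F) = 2 * 2 := by norm_num
    rw [this]; exact mul_ne_zero h2 h2
  rw [← Equiv.sum_comp (Equiv.subRight (a / (2 * b))), Finset.mul_sum]
  refine Finset.sum_congr rfl fun y _ => ?_
  rw [← AddChar.map_add_eq_mul]
  congr 1
  simp only [Equiv.subRight_apply]
  field_simp
  ring

lemma aux_main (ψ : AddChar F ℂ) (hψ : ψ.IsPrimitive) (h2 : (2 : F) ≠ 0)
    (B : ℝ) (hB : 0 ≤ B) (hB4 : B ^ 4 = 3 * (Fintype.card F : ℝ) ^ 3) (f : F → ℂ) (n : ℝ)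
    (hf : ∑ x, ‖f x‖ ^ 2 = n) :
    ‖(Fintype.card F : ℂ) ^ 2 * ∑ x, ∑ y, f x * f (x + y) * f (x + y ^ 2) -
      (Fintype.card F : ℂ) * (∑ x, f x) ^ 3‖ ^ 2 ≤ (1 + B) * (Fintype.card F : ℝ) ^ 4 * n ^ 3 := by
  set q : ℂ := (Fintype.card F : ℂ) with hq
  set H : F → ℂ := fun a => ∑ x, f x * ψ (a * x) with hH
  have hL : ∑ a, ‖H a‖ ^ 2 = (Fintype.card F : ℝ) * n := by
    have := aux_pars ψ hψ univ f id
    simp only [id] at this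
    simp only [Finset.sum_ite_eq, mem_univ, if_true, ← aux_sq, ← Complex.ofReal_sum] at this
    rw [hf] at this
    exact_mod_cast this
  have hinv : ∀ u, q * f u = ∑ a, H a * ψ (-(a * u)) := by
    intro u
    simp only [hH, Finset.sum_mul]
    rw [Finset.sum_comm]
    have : ∀ x a, f x * ψ (a * x) * ψ (-(a * u)) = f x * ψ (a * (x - u)) := by
      intro x a
      rw [mul_assoc, ← AddChar.map_add_eq_mul]
      congr 2; ring
    simp_rw [this, ← Finset.mul_sum, aux_orth ψ hψ, sub_eq_zero]
    simp [hq, mul_comm]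
  have hT : q ^ 2 * ∑ x, ∑ y, f x * f (x + y) * f (x + y ^ 2) =
      ∑ b, ∑ a, H b * H a * H (-(a + b)) * ∑ y, ψ (-(a * y + b * y ^ 2)) := by
    have e1 : ∀ x y : F, q ^ 2 * (f x * f (x + y) * f (x + y ^ 2)) =
        ∑ b, ∑ a, H b * H a * (f x * ψ (-(a + b) * x)) * ψ (-(a * y + b * y ^ 2)) := by
      intro x y
      have : q ^ 2 * (f x * f (x + y) * f (x + y ^ 2)) =
        f x * ((q * f (x + y ^ 2)) * (q * f (x + y))) := by ring
      rw [this, hinv, hinv, Finset.sum_mul_sum, Finset.mul_sum]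
      refine Finset.sum_congr rfl fun b _ => ?_
      rw [Finset.mul_sum]
      refine Finset.sum_congr rfl fun a _ => ?_
      have : ψ (-(b * (x + y ^ 2))) * ψ (-(a * (x + y))) =
          ψ (-(a + b) * x) * ψ (-(a * y + b * y ^ 2)) := by
        rw [← AddChar.map_add_eq_mul, ← AddChar.map_add_eq_mul]
        congr 1; ring
      linear_combination f x * H b * H a * this
    simp_rw [Finset.mul_sum, e1]
    have e2 : ∀ x : F, ∑ y, ∑ b, ∑ a,
        H b * H a * (f x * ψ (-(a + b) * x)) * ψ (-(a * y + b * y ^ 2)) =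
        ∑ b, ∑ a, ∑ y, H b * H a * (f x * ψ (-(a + b) * x)) * ψ (-(a * y + b * y ^ 2)) := by
      intro x
      rw [Finset.sum_comm]
      exact Finset.sum_congr rfl fun b _ => Finset.sum_comm
    simp_rw [e2]
    rw [Finset.sum_comm]
    refine Finset.sum_congr rfl fun b _ => ?_
    rw [Finset.sum_comm]
    refine Finset.sum_congr rfl fun a _ => ?_
    rw [Finset.sum_comm]
    refine Finset.sum_congr rfl fun y _ => ?_
    rw [← Finset.sum_mul, ← Finset.mul_sum]
  have h0 : ∑ a, H 0 * H a * H (-(a + 0)) * ∑ y, ψ (-(a * y + 0 * y ^ 2)) =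
      q * (∑ x, f x) ^ 3 := by
    have e : ∀ a : F, ∑ y, ψ (-(a * y + 0 * y ^ 2)) = if -a = 0 then q else 0 := by
      intro a
      rw [hq, ← aux_orth ψ hψ]
      refine Finset.sum_congr rfl fun y _ => ?_
      congr 1; ring
    have e3 : H 0 = ∑ x, f x := by simp [hH]
    simp_rw [e, neg_eq_zero]
    rw [Finset.sum_eq_single 0]
    · simp only [add_zero, neg_zero, if_true, e3]; ring
    · intro a _ ha; simp [ha]
    · simp
  set g : F → ℂ := fun b => ∑ y, ψ (-(b * y ^ 2)) with hg
  have hD : q ^ 2 * ∑ x, ∑ y, f x * f (x + y) * f (x + y ^ 2) - q * (∑ x, f x) ^ 3 =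
      ∑ b ∈ univ.erase (0 : F), (H b * g b) *
        ∑ a, H a * H (-(a + b)) * ψ (a ^ 2 / (4 * b)) := by
    rw [hT, ← h0, ← Finset.add_sum_erase univ _ (Finset.mem_univ (0 : F)), add_sub_cancel_left]
    refine Finset.sum_congr rfl fun b hb => ?_
    rw [Finset.mul_sum]
    refine Finset.sum_congr rfl fun a _ => ?_
    rw [aux_G ψ h2 a b (Finset.ne_of_mem_erase hb)]
    simp only [hg]
    ring
  rw [hD]
  have hQ := aux_Q ψ hψ h2 B hB hB4 H (fun c => H (-c)) _ hL
    ((Equiv.sum_comp (Equiv.neg F) (fun a => ‖H a‖ ^ 2)).trans hL)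
  have hg2 : ∑ b ∈ univ.erase (0 : F), ‖H b * g b‖ ^ 2 ≤
      (Fintype.card F : ℝ) * ((Fintype.card F : ℝ) * n) := by
    rw [← hL, Finset.mul_sum]
    refine le_trans (le_of_eq (Finset.sum_congr rfl fun b hb => ?_))
      (Finset.sum_le_sum_of_subset_of_nonneg (Finset.subset_univ _) (by intros; positivity))
    rw [norm_mul, mul_pow, mul_comm, aux_gauss ψ hψ h2 b (Finset.ne_of_mem_erase hb)]
  have hn0 : 0 ≤ n := by rw [← hf]; positivity
  calc _ ≤ _ := aux_cs _ _ _
    _ ≤ ((Fintype.card F : ℝ) * ((Fintype.card F : ℝ) * n)) *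
      ((1 + B) * ((Fintype.card F : ℝ) * n) ^ 2) := by gcongr
    _ = _ := by ring

end Roth

lemma aux_final (q n B : ℝ) (hq : 1 ≤ q) (hB : 0 ≤ B) (hB4 : B ^ 4 = 3 * q ^ 3)
    (hn : n > 10 * q ^ (-(1 / 15 : ℝ)) * q)
    (h : (q ^ 2 * n - q * n ^ 3) ^ 2 ≤ (1 + B) * q ^ 4 * n ^ 3) : False := by
  have hq0 : 0 < q := by linarith
  set r := q ^ (1 / 60 : ℝ) with hr
  have hr1 : 1 ≤ r := Real.one_le_rpow hq (by norm_num)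
  have hr0 : 0 < r := by linarith
  have hqr : q = r ^ 60 := by
    rw [hr, ← Real.rpow_natCast, ← Real.rpow_mul hq0.le]; norm_num
  have hn' : n > 10 * r ^ 56 := by
    have : q ^ (-(1 / 15 : ℝ)) * q = r ^ 56 := by
      nth_rewrite 2 [← Real.rpow_one q]
      rw [← Real.rpow_add hq0, hr, ← Real.rpow_natCast, ← Real.rpow_mul hq0.le]; norm_num
    rw [mul_assoc, this] at hn; exact hn
  have hn0 : 0 < n := lt_trans (by positivity) hn'
  have hB2 : B ≤ 2 * r ^ 45 := by
    refine le_of_pow_le_pow_left₀ (n := 4) (by norm_num) (by positivity) ?_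
    rw [hB4, hqr]
    have : 0 ≤ r ^ 180 := by positivity
    calc 3 * (r ^ 60) ^ 3 = 3 * r ^ 180 := by ring
      _ ≤ 16 * r ^ 180 := by linarith
      _ = _ := by ring
  have h45 : 1 + B ≤ 3 * r ^ 45 := by
    have : 1 ≤ r ^ 45 := one_le_pow₀ hr1
    linarith
  have hn2 : 2 * q ≤ n ^ 2 := by
    have h1 : (10 * r ^ 56) ^ 2 ≤ n ^ 2 := by gcongr
    have h2 : r ^ 60 ≤ r ^ 112 := pow_le_pow_right₀ hr1 (by norm_num)
    have : 0 ≤ r ^ 60 := by positivity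
    rw [hqr]
    nlinarith
  have hhalf : q * n ^ 3 / 2 ≤ q * n ^ 3 - q ^ 2 * n := by
    have : 0 ≤ q * n * (n ^ 2 - 2 * q) := mul_nonneg (by positivity) (by linarith)
    nlinarith
  have h1 : (q * n ^ 3 / 2) ^ 2 ≤ 3 * r ^ 45 * q ^ 4 * n ^ 3 := by
    calc _ ≤ (q * n ^ 3 - q ^ 2 * n) ^ 2 := by gcongr
      _ = (q ^ 2 * n - q * n ^ 3) ^ 2 := by ring
      _ ≤ _ := h
      _ ≤ _ := by gcongr
  have h2 : n ^ 3 ≤ 12 * r ^ 45 * q ^ 2 := by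
    have hp : 0 < q ^ 2 * n ^ 3 := by positivity
    refine le_of_mul_le_mul_left ?_ hp
    nlinarith
  have h3 : (10 * r ^ 56) ^ 3 ≤ n ^ 3 := by gcongr
  have h4 : r ^ 165 ≤ r ^ 168 := pow_le_pow_right₀ hr1 (by norm_num)
  have h5 : 0 < r ^ 165 := by positivity
  have h6 : 12 * r ^ 45 * q ^ 2 = 12 * r ^ 165 := by rw [hqr]; ring
  have h7 : (10 * r ^ 56) ^ 3 = 1000 * r ^ 168 := by ring
  linarith

theorem stmt1 : ∃ c₁ : ℝ, 0 < c₁ ∧ ∀ (p : ℕ) [NeZero p], p.Prime → p ≠ 2 →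
    ∀ A : Finset (ZMod p), (A.card : ℝ) > c₁ * (p : ℝ) ^ (-(1 / 15 : ℝ)) * p →
    ∃ x ∈ A, ∃ y : ZMod p, y ≠ 0 ∧ x + y ∈ A ∧ x + y ^ 2 ∈ A := by
  refine ⟨10, by norm_num, ?_⟩
  intro p _ hp hp2 A hA
  haveI : Fact p.Prime := ⟨hp⟩
  by_contra! hcon
  have h2 : (2 : ZMod p) ≠ 0 := by
    intro h
    have : ((2 : ℕ) : ZMod p) = 0 := by exact_mod_cast h
    rw [ZMod.natCast_eq_zero_iff] at this
    exact hp2 ((Nat.prime_dvd_prime_iff_eq hp Nat.prime_two).1 this)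
  have hB4 : ((3 * (p : ℝ) ^ 3) ^ (1 / 4 : ℝ)) ^ 4 = 3 * (p : ℝ) ^ 3 := by
    rw [← Real.rpow_natCast, ← Real.rpow_mul (by positivity)]; norm_num
  set B : ℝ := (3 * (p : ℝ) ^ 3) ^ (1 / 4 : ℝ)
  have hB : 0 ≤ B := by positivity
  have hmain := aux_main (F := ZMod p) ZMod.stdAddChar (ZMod.isPrimitive_stdAddChar p) h2 B hB
    (by rw [ZMod.card]; exact hB4) (fun x => if x ∈ A then 1 else 0) (A.card : ℝ) (by
      have : ∀ x : ZMod p, ‖(if x ∈ A then (1 : ℂ) else 0)‖ ^ 2 = if x ∈ A then (1 : ℝ) else 0 := by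
        intro x; split_ifs <;> simp
      simp_rw [this]; simp)
  have hT : ∑ x : ZMod p, ∑ y : ZMod p, (if x ∈ A then (1 : ℂ) else 0) *
      (if x + y ∈ A then 1 else 0) * (if x + y ^ 2 ∈ A then 1 else 0) = (A.card : ℂ) := by
    have : ∀ x : ZMod p, ∑ y : ZMod p, (if x ∈ A then (1 : ℂ) else 0) *
      (if x + y ∈ A then 1 else 0) * (if x + y ^ 2 ∈ A then 1 else 0) =
        if x ∈ A then 1 else 0 := by
      intro x
      rw [Finset.sum_eq_single 0]
      · by_cases hx : x ∈ A <;> simp [hx]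
      · intro y _ hy
        by_cases hx : x ∈ A
        · by_cases hxy : x + y ∈ A
          · simp [hcon x hx y hy hxy]
          · simp [hxy]
        · simp [hx]
      · simp
    simp_rw [this]; simp
  have hS : ∑ x : ZMod p, (if x ∈ A then (1 : ℂ) else 0) = (A.card : ℂ) := by simp
  simp only [hT, hS, ZMod.card] at hmain
  have hcast : ((p : ℂ) ^ 2 * (A.card : ℂ) - (p : ℂ) * (A.card : ℂ) ^ 3) =
      (((p : ℝ) ^ 2 * (A.card : ℝ) - (p : ℝ) * (A.card : ℝ) ^ 3 : ℝ) : ℂ) := by push_cast; ring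
  rw [hcast, Complex.norm_real, Real.norm_eq_abs, sq_abs] at hmain
  exact aux_final p A.card B (by exact_mod_cast hp.one_lt.le) hB hB4 hA hmain
end

section
/- There is an absolute constant c > 0 such that for every odd prime p and every subset A ⊆ F_p of density δ = |A|/p, the number of pairs (x, y) ∈ F_p × F_p with x ∈ A, x + y ∈ A, and x + y² ∈ A is at least (δ³ − c · p^(−1/10) · δ^(3/2)) · p². -/
open Finset

section nlr
variable {F : Type*} [Field F] [Fintype F] [DecidableEq F]

lemma nl_chi_corr (hF : ringChar F ≠ 2) (d : F) (hd : d ≠ 0) :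
    ∑ t : F, quadraticChar F t * quadraticChar F (t - d) = -1 := by
  have h0 := quadraticChar_sum_zero hF
  have h1 : ∑ t ∈ univ.erase (0:F), quadraticChar F t * quadraticChar F (t - d)
      = ∑ v ∈ univ.erase (1:F), quadraticChar F v := by
    refine Finset.sum_bij' (fun t _ => 1 - d / t) (fun v _ => d / (1 - v)) ?_ ?_ ?_ ?_ ?_
    · intro t ht
      have : t ≠ 0 := by simpa using ht
      simp [hd, this]
    · intro v hv
      have : v ≠ 1 := by simpa using hv
      have : 1 - v ≠ 0 := sub_ne_zero.2 this.symm
      simp [hd, this]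
    · intro t ht
      have : t ≠ 0 := by simpa using ht
      simp only [sub_sub_cancel]; field_simp
    · intro v hv
      have : v ≠ 1 := by simpa using hv
      have : 1 - v ≠ 0 := sub_ne_zero.2 this.symm
      field_simp; ring
    · intro t ht
      have ht0 : t ≠ 0 := by simpa using ht
      have : t - d = t * (1 - d / t) := by field_simp
      rw [this, map_mul, ← mul_assoc, ← sq, quadraticChar_sq_one ht0, one_mul]
  rw [← Finset.add_sum_erase univ _ (mem_univ (0:F)), h1]
  rw [← Finset.add_sum_erase univ _ (mem_univ (1:F))] at h0
  simp at h0 ⊢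
  linarith

/-- real valued quadratic character -/
noncomputable def nlchi (x : F) : ℝ := (quadraticChar F x : ℝ)

lemma nl_chi_corr' (hF : ringChar F ≠ 2) (r r' : F) :
    ∑ t : F, nlchi (t - r) * nlchi (t - r') = (if r = r' then (Fintype.card F : ℝ) else 0) - 1 := by
  have e : ∑ t : F, nlchi (t - r) * nlchi (t - r') = ∑ t : F, nlchi t * nlchi (t - (r' - r)) := by
    refine Fintype.sum_equiv (Equiv.subRight r) _ _ ?_
    intro t
    simp
  rw [e]
  by_cases h : r = r'
  · subst h
    simp only [sub_self, sub_zero, if_true]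
    rw [← Finset.add_sum_erase univ _ (mem_univ (0:F))]
    have : ∑ x ∈ univ.erase (0:F), nlchi x * nlchi x = ∑ x ∈ univ.erase (0:F), (1:ℝ) := by
      refine Finset.sum_congr rfl ?_
      intro x hx
      have hx : x ≠ 0 := by simpa using hx
      have := quadraticChar_sq_one hx
      rw [nlchi, ← sq]; exact_mod_cast this
    rw [this]
    have hc : 1 ≤ Fintype.card F := Fintype.card_pos
    simp [nlchi, Finset.card_erase_of_mem, Finset.card_univ, Nat.cast_sub hc]
  · have := nl_chi_corr hF (r' - r) (sub_ne_zero.2 (Ne.symm h))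
    simp only [h, if_false, zero_sub, nlchi]
    exact_mod_cast this

lemma nl_op (hF : ringChar F ≠ 2) (g : F → ℝ) :
    ∑ t : F, (∑ r, g r * nlchi (t - r)) ^ 2 ≤ Fintype.card F * ∑ r, g r ^ 2 := by
  have e : ∑ t : F, (∑ r, g r * nlchi (t - r)) ^ 2
      = ∑ r, ∑ r', g r * g r' * ∑ t : F, nlchi (t - r) * nlchi (t - r') := by
    simp_rw [sq, Finset.sum_mul_sum, Finset.mul_sum]
    rw [Finset.sum_comm]
    refine Finset.sum_congr rfl fun r _ => ?_
    rw [Finset.sum_comm]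
    refine Finset.sum_congr rfl fun r' _ => Finset.sum_congr rfl fun t _ => ?_
    ring
  rw [e]
  simp_rw [nl_chi_corr' hF, mul_sub, Finset.sum_sub_distrib, mul_ite, mul_zero, mul_one]
  simp only [Finset.sum_ite_eq, mem_univ, if_true]
  rw [← Finset.sum_mul_sum, ← sq, ← Finset.sum_mul]
  have := sq_nonneg (∑ i, g i)
  simp_rw [sq] at this ⊢
  linarith

lemma nl_op2 (hF : ringChar F ≠ 2) (G : F → F → ℝ) :
    ∑ t : F, ∑ t', (∑ r, ∑ r', G r r' * nlchi (t - r) * nlchi (t' - r')) ^ 2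
      ≤ (Fintype.card F : ℝ) ^ 2 * ∑ r, ∑ r', G r r' ^ 2 := by
  have h1 : ∀ t' t : F, ∑ r, ∑ r', G r r' * nlchi (t - r) * nlchi (t' - r')
      = ∑ r, (∑ r', G r r' * nlchi (t' - r')) * nlchi (t - r) := by
    intro t' t
    refine Finset.sum_congr rfl fun r _ => ?_
    rw [Finset.sum_mul]
    refine Finset.sum_congr rfl fun r' _ => by ring
  rw [Finset.sum_comm]
  simp_rw [h1]
  calc _ ≤ ∑ t', Fintype.card F * ∑ r, (∑ r', G r r' * nlchi (t' - r')) ^ 2 :=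
        Finset.sum_le_sum fun t' _ => nl_op hF _
    _ = Fintype.card F * ∑ r, ∑ t', (∑ r', G r r' * nlchi (t' - r')) ^ 2 := by
        rw [← Finset.mul_sum, Finset.sum_comm]
    _ ≤ Fintype.card F * ∑ r, Fintype.card F * ∑ r', G r r' ^ 2 := by
        gcongr with r _
        exact nl_op hF _
    _ = _ := by rw [← Finset.mul_sum]; ring

lemma nl_bil (hF : ringChar F ≠ 2) (G : F × F → ℝ) :
    ∑ P : F × F, G P * ∑ R : F × F, G R * (nlchi (P.1 - R.1) * nlchi (P.2 - R.2))
      ≤ Fintype.card F * ∑ R, G R ^ 2 := by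
  have h := nl_op2 hF (fun a b => G (a, b))
  have h' : ∑ P : F × F, (∑ R : F × F, G R * (nlchi (P.1 - R.1) * nlchi (P.2 - R.2))) ^ 2
      ≤ (Fintype.card F : ℝ) ^ 2 * ∑ R, G R ^ 2 := by
    simp_rw [Fintype.sum_prod_type, ← mul_assoc]
    exact h
  have cs := Finset.sum_mul_sq_le_sq_mul_sq univ G
    (fun P : F × F => ∑ R : F × F, G R * (nlchi (P.1 - R.1) * nlchi (P.2 - R.2)))
  have hG : 0 ≤ ∑ R, G R ^ 2 := Finset.sum_nonneg fun _ _ => sq_nonneg _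
  refine abs_le_of_sq_le_sq' ?_ (by positivity) |>.2
  calc _ ≤ _ := cs
    _ ≤ _ := mul_le_mul_of_nonneg_left h' hG
    _ = _ := by ring

/-- fibres of size at most 2 -/
lemma nl_fib {α β : Type*} [Fintype α] [Fintype β] [DecidableEq β] (g : α → β) (φ : α → ℝ)
    (hg : ∀ b, #{a | g a = b} ≤ 2) :
    ∑ b, (∑ a with g a = b, φ a) ^ 2 ≤ 2 * ∑ a, φ a ^ 2 := by
  rw [← Finset.sum_fiberwise univ g (fun a => φ a ^ 2), Finset.mul_sum]
  refine Finset.sum_le_sum fun b _ => ?_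
  refine sq_sum_le_card_mul_sum_sq.trans ?_
  have : 0 ≤ ∑ a with g a = b, φ a ^ 2 := Finset.sum_nonneg fun _ _ => sq_nonneg _
  gcongr
  exact_mod_cast hg b

lemma nl_fib1 (P : F → F) (hP : ∀ b, #{a | P a = b} ≤ 2) (φ : F → ℝ) (hφ : ∀ x, 0 ≤ φ x) :
    ∑ x, (∑ y, φ (x + P y)) ^ 2 ≤ 2 * Fintype.card F * (∑ x, φ x) ^ 2 := by
  have h1 : ∀ x, ∑ y, φ (x + P y) ≤ 2 * ∑ x, φ x := by
    intro x
    rw [← Finset.sum_fiberwise' univ P (fun b => φ (x + b))]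
    have : ∑ z, φ z = ∑ b, φ (x + b) := (Fintype.sum_equiv (Equiv.addLeft x) _ _ (fun _ => rfl)).symm
    rw [this, Finset.mul_sum]
    refine Finset.sum_le_sum fun b _ => ?_
    rw [Finset.sum_const, nsmul_eq_mul]
    have := hφ (x + b)
    gcongr
    exact_mod_cast hP b
  have h2 : ∑ x, ∑ y, φ (x + P y) = Fintype.card F * ∑ x, φ x := by
    rw [Finset.sum_comm]
    have : ∀ y, ∑ x, φ (x + P y) = ∑ x, φ x := fun y =>
      Fintype.sum_equiv (Equiv.addRight (P y)) _ _ (fun _ => rfl)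
    simp [this, Finset.card_univ]
  calc _ ≤ ∑ x, (2 * ∑ x, φ x) * (∑ y, φ (x + P y)) := by
        refine Finset.sum_le_sum fun x _ => ?_
        rw [sq]
        exact mul_le_mul_of_nonneg_right (h1 x) (Finset.sum_nonneg fun _ _ => hφ _)
    _ = _ := by rw [← Finset.mul_sum, h2]; ring

lemma nl_card2 {α : Type*} [DecidableEq α] (s : Finset α) (f : α → α)
    (h : ∀ a ∈ s, ∀ b ∈ s, b = a ∨ b = f a) : #s ≤ 2 := by
  rcases s.eq_empty_or_nonempty with rfl | ⟨a, ha⟩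
  · simp
  · refine (Finset.card_le_card (t := {a, f a}) ?_).trans Finset.card_le_two
    intro b hb
    simpa using h a ha b hb

lemma nl_two (hF : ringChar F ≠ 2) : (2 : F) ≠ 0 := Ring.two_ne_zero hF

lemma nl_T (hF : ringChar F ≠ 2) (h : F → ℝ) :
    ∑ a : F, ∑ b, ∑ c, ∑ d, h a * h b * h c * h d *
      (nlchi (a + d - b - c) * nlchi (a + d - b - c + 2 * ((d - a + b - c) * (d - a - b + c))))
      ≤ 2 * Fintype.card F * (∑ x, h x ^ 2) ^ 2 := by
  set g : F × F → F × F := fun v => (v.1 + v.2, v.1 + v.2 + 2 * (v.1 - v.2) ^ 2) with hg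
  set φ : F × F → ℝ := fun v => h v.1 * h v.2 with hφ
  set G : F × F → ℝ := fun R => ∑ v with g v = R, φ v with hG
  have hfib : ∀ b, #{a | g a = b} ≤ 2 := by
    intro b
    refine nl_card2 _ Prod.swap ?_
    intro v hv w hw
    have e : g v = g w := by
      rw [(mem_filter.1 hv).2, (mem_filter.1 hw).2]
    obtain ⟨v1, v2⟩ := v
    obtain ⟨w1, w2⟩ := w
    simp only [hg, Prod.mk.injEq] at e
    obtain ⟨e1, e2⟩ := e
    have h2 := nl_two hF
    have e3 : (2:F) * (2 * (2 * ((w1 - v1) * (w1 - v2)))) = 0 := by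
      have : w2 = v1 + v2 - w1 := by rw [e1]; ring
      subst this
      linear_combination -e2 + e1
    simp only [mul_eq_zero, h2, false_or, sub_eq_zero] at e3
    rcases e3 with rfl | rfl
    · left; ext <;> simp; linear_combination -e1
    · right; ext <;> simp; linear_combination -e1
  have e1 : ∀ K : F × F → ℝ, ∑ R, G R * K R = ∑ v, φ v * K (g v) := by
    intro K
    rw [← Finset.sum_fiberwise univ g (fun v => φ v * K (g v))]
    refine Finset.sum_congr rfl fun R _ => ?_
    rw [hG, Finset.sum_mul]
    refine Finset.sum_congr rfl fun v hv => ?_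
    rw [(mem_filter.1 hv).2]
  have e2 : ∑ a : F, ∑ b, ∑ c, ∑ d, h a * h b * h c * h d *
      (nlchi (a + d - b - c) * nlchi (a + d - b - c + 2 * ((d - a + b - c) * (d - a - b + c))))
      = ∑ P : F × F, G P * ∑ R : F × F, G R * (nlchi (P.1 - R.1) * nlchi (P.2 - R.2)) := by
    simp_rw [e1]
    simp_rw [Fintype.sum_prod_type, Finset.mul_sum]
    refine Finset.sum_congr rfl fun a _ => ?_
    have : ∀ b, ∑ c, ∑ d, h a * h b * h c * h d *
      (nlchi (a + d - b - c) * nlchi (a + d - b - c + 2 * ((d - a + b - c) * (d - a - b + c))))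
      = ∑ d, ∑ c, h a * h b * h c * h d *
      (nlchi (a + d - b - c) * nlchi (a + d - b - c + 2 * ((d - a + b - c) * (d - a - b + c)))) := 
      fun b => Finset.sum_comm
    simp_rw [this]
    rw [Finset.sum_comm]
    refine Finset.sum_congr rfl fun d _ => Finset.sum_congr rfl fun b _ =>
      Finset.sum_congr rfl fun c _ => ?_
    simp only [hg, hφ]
    have i1 : a + d - b - c = a + d - (b + c) := by ring
    have i2 : a + d - b - c + 2 * ((d - a + b - c) * (d - a - b + c)) =
      a + d + 2 * (a - d) ^ 2 - (b + c + 2 * (b - c) ^ 2) := by ring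
    rw [i2, i1]; ring
  rw [e2]
  refine (nl_bil hF G).trans ?_
  have := nl_fib g φ hfib
  have e3 : ∑ v, φ v ^ 2 = (∑ x, h x ^ 2) ^ 2 := by
    rw [sq, Finset.sum_mul_sum, Fintype.sum_prod_type]
    simp only [hφ, mul_pow]
  rw [e3] at this
  calc _ ≤ (Fintype.card F : ℝ) * (2 * (∑ x, h x ^ 2) ^ 2) := by gcongr
    _ = _ := by ring

set_option linter.unusedSectionVars false
/-- the parametrisation -/
def nlPsi (v : F × F × F × F) : F × F × F × F :=
  (v.1 - v.2.1 + v.2.1 ^ 2, v.1 - v.2.1 + (v.2.1 + v.2.2.1) ^ 2,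
    v.1 - (v.2.1 + v.2.2.2) + (v.2.1 + v.2.2.2) ^ 2,
    v.1 - (v.2.1 + v.2.2.2) + (v.2.1 + v.2.2.2 + v.2.2.1) ^ 2)

def nlFib (a b c d : F) : Finset (F × F × F × F) :=
  univ.filter (fun v => (v.2.2.1 ≠ 0 ∧ v.2.2.2 ≠ 0) ∧ nlPsi v = (a, b, c, d))

lemma nl_rel {a b c d x y z w : F} (h : nlPsi (x, y, z, w) = (a, b, c, d)) :
    a + d - b - c = 2 * z * w ∧ d - a + b - c = 2 * z * (2 * y + z + w) ∧
    d - a - b + c = 2 * w * (2 * y + z + w - 1) ∧ x = a + y - y ^ 2 := by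
  simp only [nlPsi, Prod.mk.injEq] at h
  obtain ⟨rfl, rfl, rfl, rfl⟩ := h
  refine ⟨by ring, by ring, by ring, by ring⟩

lemma nl_rel' (hF : ringChar F ≠ 2) {a b c d x y z w : F} (h1 : a + d - b - c = 2 * z * w)
    (h2 : d - a + b - c = 2 * z * (2 * y + z + w))
    (h3 : d - a - b + c = 2 * w * (2 * y + z + w - 1)) (h4 : x = a + y - y ^ 2) :
    nlPsi (x, y, z, w) = (a, b, c, d) := by
  have h0 := nl_two hF
  subst h4
  simp only [nlPsi, Prod.mk.injEq]
  refine ⟨by ring, ?_, ?_, ?_⟩ <;> apply mul_left_cancel₀ h0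
  · linear_combination -h2 + h1
  · linear_combination h1 - h3
  · linear_combination -h2 - h3

lemma nl_deg (hF : ringChar F ≠ 2) (a b c d : F)
    (h : a + d - b - c = 0 ∨ d - a + b - c = 0 ∨ d - a - b + c = 0) : #(nlFib a b c d) ≤ 1 := by
  have h0 := nl_two hF
  rw [Finset.card_le_one]
  rintro ⟨x, y, z, w⟩ hv ⟨x', y', z', w'⟩ hv'
  simp only [nlFib, mem_filter, mem_univ, true_and] at hv hv'
  obtain ⟨⟨hz, hw⟩, hv⟩ := hv
  obtain ⟨⟨hz', hw'⟩, hv'⟩ := hv'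
  obtain ⟨r1, r2, r3, r4⟩ := nl_rel hv
  obtain ⟨s1, s2, s3, s4⟩ := nl_rel hv'
  have fin : z = z' → w = w' → 2 * y + z + w = 2 * y' + z' + w' → (x, y, z, w) = (x', y', z', w') := by
    intro e1 e2 e3
    have : y = y' := by
      apply mul_left_cancel₀ h0
      linear_combination e3 - e1 - e2
    subst this e1 e2
    rw [r4, s4]
  rcases h with h | h | h
  · rw [h] at r1
    simp [h0, hz, hw] at r1
  · rw [h] at r2 s2
    have k1 : 2 * y + z + w = 0 := by simpa [h0, hz] using r2.symm
    have k2 : 2 * y' + z' + w' = 0 := by simpa [h0, hz'] using s2.symm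
    rw [k1] at r3
    rw [k2] at s3
    have e : w = w' := by
      apply mul_left_cancel₀ h0
      linear_combination r3 - s3
    subst e
    have e' : z = z' := by
      apply mul_left_cancel₀ h0
      apply mul_right_cancel₀ hw
      rw [← r1, ← s1]
    exact fin e' rfl (k1.trans k2.symm)
  · rw [h] at r3 s3
    have k1 : 2 * y + z + w = 1 := by simpa [h0, hw, sub_eq_zero] using r3.symm
    have k2 : 2 * y' + z' + w' = 1 := by simpa [h0, hw', sub_eq_zero] using s3.symm
    rw [k1] at r2
    rw [k2] at s2
    have e : z = z' := by
      apply mul_left_cancel₀ h0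
      linear_combination s2 - r2
    subst e
    have e' : w = w' := by
      apply mul_left_cancel₀ h0
      apply mul_left_cancel₀ hz
      linear_combination s1 - r1
    exact fin rfl e' (k1.trans k2.symm)

lemma nl_gen (hF : ringChar F ≠ 2) (a b c d s m n : F) (hs : a + d - b - c = s)
    (hm : d - a + b - c = m) (hn : d - a - b + c = n)
    (s0 : s ≠ 0) (m0 : m ≠ 0) (n0 : n ≠ 0) :
    (#(nlFib a b c d) : ℝ) = 1 + nlchi s * nlchi (s + 2 * (m * n)) := by
  have h0 := nl_two hF
  have key := quadraticChar_card_sqrts hF (s * (s + 2 * (m * n)))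
  have : #(nlFib a b c d) = #({x : F | x ^ 2 = s * (s + 2 * (m * n))}.toFinset) := by
    refine Finset.card_bij (fun v _ => s * (2 * (2 * v.2.1 + v.2.2.1 + v.2.2.2) - 1)) ?_ ?_ ?_
    · rintro ⟨x, y, z, w⟩ hv
      simp only [nlFib, mem_filter, mem_univ, true_and] at hv
      obtain ⟨⟨hz, hw⟩, hv⟩ := hv
      obtain ⟨r1, r2, r3, r4⟩ := nl_rel hv
      rw [hs] at r1
      rw [hm] at r2
      rw [hn] at r3
      simp only [Set.mem_toFinset, Set.mem_ofPred_eq]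
      rw [r1, r2, r3]; ring
    · rintro ⟨x, y, z, w⟩ hv ⟨x', y', z', w'⟩ hv' e
      simp only [nlFib, mem_filter, mem_univ, true_and] at hv hv'
      obtain ⟨⟨hz, hw⟩, hv⟩ := hv
      obtain ⟨⟨hz', hw'⟩, hv'⟩ := hv'
      obtain ⟨r1, r2, r3, r4⟩ := nl_rel hv
      obtain ⟨s1, s2, s3, s4⟩ := nl_rel hv'
      rw [hs] at r1 s1
      rw [hm] at r2 s2
      rw [hn] at r3 s3
      have e := mul_left_cancel₀ s0 e
      simp only at e
      have e3 : 2 * y + z + w = 2 * y' + z' + w' := by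
        apply mul_left_cancel₀ h0
        linear_combination e
      rw [← e3] at s2 s3
      have k0 : 2 * y + z + w ≠ 0 := by
        intro k; rw [k] at r2; apply m0; rw [r2]; ring
      have k1 : 2 * y + z + w - 1 ≠ 0 := by
        intro k; rw [k] at r3; apply n0; rw [r3]; ring
      have e1 : z = z' := by
        apply mul_left_cancel₀ h0
        apply mul_right_cancel₀ k0
        rw [← r2, ← s2]
      have e2 : w = w' := by
        apply mul_left_cancel₀ h0
        apply mul_right_cancel₀ k1
        rw [← r3, ← s3]
      have : y = y' := by
        apply mul_left_cancel₀ h0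
        linear_combination e3 - e1 - e2
      subst this e1 e2
      rw [r4, s4]
    · intro q hq
      simp only [Set.mem_toFinset, Set.mem_ofPred_eq] at hq
      obtain ⟨k, hk⟩ : ∃ k, q = s * (2 * k - 1) := ⟨(q / s + 1) / 2, by field_simp; ring⟩
      rw [hk] at hq
      have hq2 : 2 * s * (k * (k - 1)) = m * n := by
        apply mul_left_cancel₀ h0
        apply mul_left_cancel₀ s0
        linear_combination hq
      have kk : k * (k - 1) ≠ 0 := by
        intro k0; rw [k0, mul_zero] at hq2
        exact mul_ne_zero m0 n0 hq2.symm
      have k0 : k ≠ 0 := left_ne_zero_of_mul kk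
      have k1 : k - 1 ≠ 0 := right_ne_zero_of_mul kk
      obtain ⟨z, hz⟩ : ∃ z, m = 2 * z * k := ⟨m / (2 * k), by field_simp⟩
      obtain ⟨w, hw⟩ : ∃ w, n = 2 * w * (k - 1) := ⟨n / (2 * (k - 1)), by field_simp⟩
      obtain ⟨y, hy⟩ : ∃ y, k = 2 * y + z + w := ⟨(k - z - w) / 2, by field_simp; ring⟩
      have hz0 : z ≠ 0 := by rintro rfl; apply m0; rw [hz]; ring
      have hw0 : w ≠ 0 := by rintro rfl; apply n0; rw [hw]; ring
      have hs' : s = 2 * z * w := by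
        apply mul_left_cancel₀ h0
        apply mul_right_cancel₀ kk
        rw [hq2, hz, hw]; ring
      refine ⟨(a + y - y ^ 2, y, z, w), ?_, ?_⟩
      · simp only [nlFib, mem_filter, mem_univ, true_and]
        refine ⟨⟨hz0, hw0⟩, nl_rel' hF (hs.trans hs') ?_ ?_ rfl⟩
        · rw [hm, ← hy, hz]
        · rw [hn, ← hy, hw]
      · simp only; rw [← hy, hk]
  rw [this]
  have : ((#({x : F | x ^ 2 = s * (s + 2 * (m * n))}.toFinset) : ℤ) : ℝ)
    = ((quadraticChar F (s * (s + 2 * (m * n))) + 1 : ℤ) : ℝ) := by rw [← key]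
  rw [map_mul] at this
  push_cast at this
  rw [this, nlchi, nlchi]; ring

lemma nl_chi_abs (x : F) : |nlchi x| ≤ 1 := by
  rw [nlchi]
  rcases eq_or_ne x 0 with rfl | hx
  · simp
  · rcases quadraticChar_dichotomy hx with h | h <;> simp [h]

lemma nl_pt (hF : ringChar F ≠ 2) (a b c d : F) (X : ℝ) :
    X * #(nlFib a b c d) ≤ X + X * (nlchi (a + d - b - c) *
      nlchi (a + d - b - c + 2 * ((d - a + b - c) * (d - a - b + c))))
      + 2 * |X| * ((if a + d - b - c = 0 then 1 else 0) + (if d - a + b - c = 0 then 1 else 0)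
        + (if d - a - b + c = 0 then 1 else 0)) := by
  by_cases h : a + d - b - c = 0 ∨ d - a + b - c = 0 ∨ d - a - b + c = 0
  · have h1 := nl_deg hF a b c d h
    set K := nlchi (a + d - b - c) *
      nlchi (a + d - b - c + 2 * ((d - a + b - c) * (d - a - b + c))) with hK
    have hK1 : |K| ≤ 1 := by
      rw [hK, abs_mul]
      exact mul_le_one₀ (nl_chi_abs _) (abs_nonneg _) (nl_chi_abs _)
    have h1' : (#(nlFib a b c d) : ℝ) ≤ 1 := by exact_mod_cast h1
    have h2 : (0:ℝ) ≤ #(nlFib a b c d) := by positivity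
    have h3 : (1:ℝ) ≤ (if a + d - b - c = 0 then 1 else 0) + (if d - a + b - c = 0 then 1 else 0)
        + (if d - a - b + c = 0 then 1 else 0) := by
      split_ifs <;> simp_all
    have h4 : X * (#(nlFib a b c d) - 1 - K) ≤ |X| * 2 := by
      refine (le_abs_self _).trans ?_
      rw [abs_mul]
      gcongr
      rw [abs_le] at hK1 ⊢
      constructor <;> linarith
    have h5 : 2 * |X| * 1 ≤ 2 * |X| * ((if a + d - b - c = 0 then 1 else 0) + (if d - a + b - c = 0 then 1 else 0)
        + (if d - a - b + c = 0 then 1 else 0)) := by gcongr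
    linarith
  · push Not at h
    obtain ⟨s0, m0, n0⟩ := h
    rw [nl_gen hF a b c d _ _ _ rfl rfl rfl s0 m0 n0]
    simp only [s0, m0, n0, if_false]
    linarith

lemma nl_lin (h : F → ℝ) (L : F → F → F → F → Prop) [∀ a b c d, Decidable (L a b c d)]
    (hb : ∃ e : F → F → F → F, ∀ a b c d, L a b c d ↔ b = e a c d)
    (ha : ∃ e : F → F → F → F, ∀ a b c d, L a b c d ↔ a = e b c d) :
    ∑ a, ∑ b, ∑ c, ∑ d, |h a * h b * h c * h d| * (if L a b c d then 1 else 0)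
      ≤ Fintype.card F * (∑ x, h x ^ 2) ^ 2 := by
  obtain ⟨e, he⟩ := hb
  obtain ⟨e', he'⟩ := ha
  have A : ∑ a, ∑ b, ∑ c, ∑ d, (h a ^ 2 * h d ^ 2) * (if L a b c d then 1 else 0)
      = Fintype.card F * (∑ x, h x ^ 2) ^ 2 := by
    have i : ∀ a, ∑ b, ∑ c, ∑ d, (h a ^ 2 * h d ^ 2) * (if L a b c d then (1:ℝ) else 0)
        = ∑ c, ∑ d, ∑ b, (h a ^ 2 * h d ^ 2) * (if L a b c d then 1 else 0) := by
      intro a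
      rw [Finset.sum_comm]
      exact Finset.sum_congr rfl fun c _ => Finset.sum_comm
    simp_rw [i, he]
    simp only [mul_ite, mul_one, mul_zero, Finset.sum_ite_eq', mem_univ, if_true, sum_const,
      card_univ, nsmul_eq_mul]
    rw [← Finset.mul_sum, ← Finset.sum_mul_sum, sq]
  have B : ∑ a, ∑ b, ∑ c, ∑ d, (h b ^ 2 * h c ^ 2) * (if L a b c d then 1 else 0)
      = Fintype.card F * (∑ x, h x ^ 2) ^ 2 := by
    have i : ∑ a, ∑ b, ∑ c, ∑ d, (h b ^ 2 * h c ^ 2) * (if L a b c d then (1:ℝ) else 0)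
        = ∑ b, ∑ c, ∑ d, ∑ a, (h b ^ 2 * h c ^ 2) * (if L a b c d then 1 else 0) := by
      rw [Finset.sum_comm]
      refine Finset.sum_congr rfl fun b _ => ?_
      rw [Finset.sum_comm]
      exact Finset.sum_congr rfl fun c _ => Finset.sum_comm
    simp_rw [i, he']
    simp only [mul_ite, mul_one, mul_zero, Finset.sum_ite_eq', mem_univ, if_true, sum_const,
      card_univ, nsmul_eq_mul]
    simp_rw [← Finset.mul_sum, ← Finset.sum_mul]
    rw [sq]
  have C : ∑ a, ∑ b, ∑ c, ∑ d, |h a * h b * h c * h d| * (if L a b c d then 1 else 0)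
    ≤ ∑ a, ∑ b, ∑ c, ∑ d, (1 / 2 * ((h a ^ 2 * h d ^ 2) * (if L a b c d then 1 else 0)) +
      1 / 2 * ((h b ^ 2 * h c ^ 2) * (if L a b c d then 1 else 0))) := by
    refine Finset.sum_le_sum fun a _ => Finset.sum_le_sum fun b _ => Finset.sum_le_sum fun c _ =>
      Finset.sum_le_sum fun d _ => ?_
    split_ifs
    · rw [mul_one, abs_le]
      constructor <;> nlinarith [sq_nonneg (h a * h d - h b * h c), sq_nonneg (h a * h d + h b * h c)]
    · simp
  simp only [Finset.sum_add_distrib, ← Finset.mul_sum _ _ (1 / 2 : ℝ)] at C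
  rw [A, B] at C
  linarith

lemma nl_Q' (hF : ringChar F ≠ 2) (h : F → ℝ) (h0 : ∑ x, h x = 0) :
    ∑ a, ∑ b, ∑ c, ∑ d, h a * h b * h c * h d * (#(nlFib a b c d) : ℝ)
      ≤ 8 * Fintype.card F * (∑ x, h x ^ 2) ^ 2 := by
  have C := Finset.sum_le_sum fun a (_ : a ∈ (univ : Finset F)) =>
    Finset.sum_le_sum fun b (_ : b ∈ (univ : Finset F)) =>
    Finset.sum_le_sum fun c (_ : c ∈ (univ : Finset F)) =>
    Finset.sum_le_sum fun d (_ : d ∈ (univ : Finset F)) => nl_pt hF a b c d (h a * h b * h c * h d)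
  have T := nl_T hF h
  have Z : ∑ a, ∑ b, ∑ c, ∑ d, h a * h b * h c * h d = 0 := by
    simp_rw [← Finset.mul_sum, h0]; simp
  have L1 := nl_lin h (fun a b c d => a + d - b - c = 0)
    ⟨fun a c d => a + d - c, fun a b c d => by grind⟩ ⟨fun b c d => b + c - d, fun a b c d => by grind⟩
  have L2 := nl_lin h (fun a b c d => d - a + b - c = 0)
    ⟨fun a c d => a - d + c, fun a b c d => by grind⟩ ⟨fun b c d => d + b - c, fun a b c d => by grind⟩
  have L3 := nl_lin h (fun a b c d => d - a - b + c = 0)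
    ⟨fun a c d => d - a + c, fun a b c d => by grind⟩ ⟨fun b c d => d - b + c, fun a b c d => by grind⟩
  simp only [mul_add (2 * abs (_ : ℝ)), Finset.sum_add_distrib] at C
  simp only [mul_assoc (2:ℝ), ← Finset.mul_sum _ _ (2:ℝ)] at C
  rw [Z] at C
  linarith

lemma nl_sub1 (b : F) : #{a : F | -a + a ^ 2 = b} ≤ 2 := by
  refine nl_card2 _ (fun a => 1 - a) ?_
  intro v hv w hw
  have e : -v + v ^ 2 = -w + w ^ 2 := by
    rw [(mem_filter.1 hv).2, (mem_filter.1 hw).2]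
  have : (w - v) * (w - (1 - v)) = 0 := by linear_combination -e
  simpa [sub_eq_zero] using this

lemma nl_sub2 (b : F) : #{a : F | a ^ 2 = b} ≤ 2 := by
  refine nl_card2 _ (fun a => - a) ?_
  intro v hv w hw
  have e : v ^ 2 = w ^ 2 := by
    rw [(mem_filter.1 hv).2, (mem_filter.1 hw).2]
  exact sq_eq_sq_iff_eq_or_eq_neg.1 e.symm

lemma nl_Q (hF : ringChar F ≠ 2) (h : F → ℝ) (h0 : ∑ x, h x = 0) :
    ∑ x, ∑ z, (∑ y, h (x - y + y ^ 2) * h (x - y + (y + z) ^ 2)) ^ 2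
      ≤ 12 * Fintype.card F * (∑ x, h x ^ 2) ^ 2 := by
  set k : F × F × F × F → ℝ := fun u => h u.1 * h u.2.1 * h u.2.2.1 * h u.2.2.2 with hk
  set φ : F → ℝ := fun x => h x ^ 2 with hφ
  have e1 : ∑ x, ∑ z, (∑ y, h (x - y + y ^ 2) * h (x - y + (y + z) ^ 2)) ^ 2
      = ∑ x, ∑ y, ∑ z, ∑ w, k (nlPsi (x, y, z, w)) := by
    refine Finset.sum_congr rfl fun x _ => ?_
    rw [Finset.sum_comm]
    refine Finset.sum_congr rfl fun z _ => ?_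
    rw [sq, Finset.sum_mul_sum]
    refine Finset.sum_congr rfl fun y _ => ?_
    refine (Fintype.sum_equiv (Equiv.addLeft y) _ _ ?_).symm
    intro w
    simp only [hk, nlPsi, Equiv.coe_addLeft]
    ring
  have e2 : ∑ x, ∑ y, ∑ z, ∑ w, k (nlPsi (x, y, z, w)) ≤
      ∑ x, ∑ y, ∑ z, ∑ w, ((if z ≠ 0 ∧ w ≠ 0 then k (nlPsi (x, y, z, w)) else 0)
        + (if z = 0 then φ (x - y + y ^ 2) * φ (x - (y + w) + (y + w) ^ 2) else 0)
        + (if w = 0 then φ (x - y + y ^ 2) * φ (x - y + (y + z) ^ 2) else 0)) := by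
    refine Finset.sum_le_sum fun x _ => Finset.sum_le_sum fun y _ => Finset.sum_le_sum fun z _ =>
      Finset.sum_le_sum fun w _ => ?_
    have p1 : 0 ≤ φ (x - y + y ^ 2) * φ (x - (y + w) + (y + w) ^ 2) := by positivity
    have p2 : 0 ≤ φ (x - y + y ^ 2) * φ (x - y + (y + z) ^ 2) := by positivity
    by_cases hz : z = 0
    · have : k (nlPsi (x, y, z, w)) = φ (x - y + y ^ 2) * φ (x - (y + w) + (y + w) ^ 2) := by
        subst hz
        simp only [hk, hφ, nlPsi, add_zero]; ring
      rw [this, if_neg (by simp [hz]), if_pos hz]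
      split_ifs <;> linarith
    · by_cases hw : w = 0
      · have : k (nlPsi (x, y, z, w)) = φ (x - y + y ^ 2) * φ (x - y + (y + z) ^ 2) := by
          subst hw
          simp only [hk, hφ, nlPsi, add_zero]; ring
        rw [this, if_neg (by simp [hw]), if_pos hw, if_neg hz]
        linarith
      · simp [hz, hw]
  have e3 : ∑ x, ∑ y, ∑ z, ∑ w, (if z ≠ 0 ∧ w ≠ 0 then k (nlPsi (x, y, z, w)) else 0)
      ≤ 8 * Fintype.card F * (∑ x, h x ^ 2) ^ 2 := by
    refine le_trans (le_of_eq ?_) (nl_Q' hF h h0)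
    have : ∑ x, ∑ y, ∑ z, ∑ w, (if z ≠ 0 ∧ w ≠ 0 then k (nlPsi (x, y, z, w)) else 0)
      = ∑ v : F × F × F × F, if v.2.2.1 ≠ 0 ∧ v.2.2.2 ≠ 0 then k (nlPsi v) else 0 := by
      simp_rw [Fintype.sum_prod_type]
    rw [this, ← Finset.sum_filter, ← Finset.sum_fiberwise' _ nlPsi k]
    simp_rw [Finset.sum_const, nsmul_eq_mul, Finset.filter_filter]
    simp_rw [Fintype.sum_prod_type]
    refine Finset.sum_congr rfl fun a _ => Finset.sum_congr rfl fun b _ =>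
      Finset.sum_congr rfl fun c _ => Finset.sum_congr rfl fun d _ => ?_
    rw [mul_comm]; rfl
  have e4 : ∑ x : F, ∑ y : F, ∑ z : F, ∑ w : F,
      (if z = 0 then φ (x - y + y ^ 2) * φ (x - (y + w) + (y + w) ^ 2) else 0)
      ≤ 2 * Fintype.card F * (∑ x, h x ^ 2) ^ 2 := by
    refine le_trans (le_of_eq ?_)
      (nl_fib1 (fun y : F => -y + y ^ 2) nl_sub1 φ (fun x => sq_nonneg _))
    refine Finset.sum_congr rfl fun x _ => ?_
    rw [sq, Finset.sum_mul_sum]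
    refine Finset.sum_congr rfl fun y _ => ?_
    rw [Finset.sum_comm]
    simp only [Finset.sum_ite_eq', mem_univ, if_true]
    refine Fintype.sum_equiv (Equiv.addLeft y) _ _ ?_
    intro w
    simp only [Equiv.coe_addLeft]
    congr 2 <;> ring
  have e5 : ∑ x : F, ∑ y : F, ∑ z : F, ∑ w : F,
      (if w = 0 then φ (x - y + y ^ 2) * φ (x - y + (y + z) ^ 2) else 0)
      ≤ 2 * Fintype.card F * (∑ x, h x ^ 2) ^ 2 := by
    refine le_trans (le_of_eq ?_)
      (nl_fib1 (fun y : F => y ^ 2) nl_sub2 φ (fun x => sq_nonneg _))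
    simp_rw [sq (∑ y, _), Finset.sum_mul_sum]
    rw [Finset.sum_comm]
    conv_rhs => rw [Finset.sum_comm]
    refine Finset.sum_congr rfl fun y _ => ?_
    refine Fintype.sum_equiv (Equiv.subRight y) _ _ ?_
    intro x
    refine Fintype.sum_equiv (Equiv.addLeft y) _ _ ?_
    intro z
    simp
  simp only [Finset.sum_add_distrib] at e2
  rw [e1]
  linarith

lemma nl_E (hF : ringChar F ≠ 2) (f h : F → ℝ) (h0 : ∑ x, h x = 0) :
    (∑ x, ∑ y, f x * f (x + y) * h (x + y ^ 2)) ^ 4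
      ≤ 12 * Fintype.card F * (∑ x, f x ^ 2) ^ 4 * (∑ x, h x ^ 2) ^ 2 := by
  set S := ∑ x, (∑ y, f (x + y) * h (x + y ^ 2)) ^ 2 with hS
  have c1 : (∑ x, ∑ y, f x * f (x + y) * h (x + y ^ 2)) ^ 2 ≤ (∑ x, f x ^ 2) * S := by
    simp_rw [mul_assoc, ← Finset.mul_sum]
    exact Finset.sum_mul_sq_le_sq_mul_sq univ f _
  have e : S = ∑ v : F × F, (f v.1 * f (v.1 + v.2)) *
      ∑ y, h (v.1 - y + y ^ 2) * h (v.1 - y + (y + v.2) ^ 2) := by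
    rw [Fintype.sum_prod_type]
    simp_rw [hS, sq (∑ y, _), Finset.sum_mul_sum, Finset.mul_sum]
    have : ∀ x, ∑ z, ∑ y, f x * f (x + z) * (h (x - y + y ^ 2) * h (x - y + (y + z) ^ 2))
        = ∑ y, ∑ z, f x * f (x + z) * (h (x - y + y ^ 2) * h (x - y + (y + z) ^ 2)) :=
      fun x => Finset.sum_comm
    simp_rw [this]
    rw [Finset.sum_comm]
    conv_rhs => rw [Finset.sum_comm]
    refine Finset.sum_congr rfl fun y _ => ?_
    refine (Fintype.sum_equiv (Equiv.subRight y) _ _ ?_).symm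
    intro x
    refine Fintype.sum_equiv (Equiv.addLeft y) _ _ ?_
    intro z
    simp only [Equiv.coe_addLeft, Equiv.subRight_apply, sub_add_cancel]
    have : x - y + (y + z) = x + z := by ring
    rw [this]; ring
  have c2 : S ^ 2 ≤ (∑ x, f x ^ 2) ^ 2 * (12 * Fintype.card F * (∑ x, h x ^ 2) ^ 2) := by
    rw [e]
    refine (Finset.sum_mul_sq_le_sq_mul_sq univ _ _).trans ?_
    have a1 : ∑ v : F × F, (f v.1 * f (v.1 + v.2)) ^ 2 = (∑ x, f x ^ 2) ^ 2 := by
      rw [Fintype.sum_prod_type, sq, Finset.sum_mul_sum]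
      refine Finset.sum_congr rfl fun x _ => ?_
      refine Fintype.sum_equiv (Equiv.addLeft x) _ _ ?_
      intro z
      simp [mul_pow]
    have a2 := nl_Q hF h h0
    rw [a1]
    gcongr
    rw [Fintype.sum_prod_type]
    exact a2
  have n1 : 0 ≤ ∑ x, f x ^ 2 := Finset.sum_nonneg fun _ _ => sq_nonneg _
  calc _ = ((∑ x, ∑ y, f x * f (x + y) * h (x + y ^ 2)) ^ 2) ^ 2 := by ring
    _ ≤ ((∑ x, f x ^ 2) * S) ^ 2 := by gcongr
    _ = (∑ x, f x ^ 2) ^ 2 * S ^ 2 := by ring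
    _ ≤ (∑ x, f x ^ 2) ^ 2 * ((∑ x, f x ^ 2) ^ 2 * (12 * Fintype.card F * (∑ x, h x ^ 2) ^ 2)) := by
      gcongr
    _ = _ := by ring

lemma nl_main (hF : ringChar F ≠ 2) (A : Finset F) :
    ∃ E : ℝ, E ^ 4 ≤ 12 * Fintype.card F * (#A : ℝ) ^ 6 ∧
    (#{xy : F × F | xy.1 ∈ A ∧ xy.1 + xy.2 ∈ A ∧ xy.1 + xy.2 ^ 2 ∈ A} : ℝ)
      = (#A : ℝ) ^ 3 / Fintype.card F + E := by
  set q : ℝ := (Fintype.card F : ℝ) with hq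
  have q0 : 0 < q := by rw [hq]; exact_mod_cast Fintype.card_pos
  set f : F → ℝ := fun x => if x ∈ A then 1 else 0 with hf
  set δ : ℝ := #A / q with hδ
  set h : F → ℝ := fun x => f x - δ with hh
  have f1 : ∑ x, f x = #A := by simp [hf]
  have f2 : ∑ x, f x ^ 2 = #A := by simp [hf]
  have hc : ∑ x : F, δ = #A := by
    rw [Finset.sum_const, Finset.card_univ, nsmul_eq_mul, ← hq, hδ]; field_simp
  have h0 : ∑ x, h x = 0 := by simp only [hh, Finset.sum_sub_distrib, hc, f1, sub_self]
  have h2 : ∑ x, h x ^ 2 ≤ #A := by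
    have : ∀ x, h x ^ 2 = f x ^ 2 - δ * (f x + h x) := fun x => by simp only [hh]; ring
    simp_rw [this, Finset.sum_sub_distrib, ← Finset.mul_sum, Finset.sum_add_distrib, f2, h0, f1]
    have : 0 ≤ δ * (#A + 0) := by positivity
    linarith
  have h2' : 0 ≤ ∑ x, h x ^ 2 := Finset.sum_nonneg fun _ _ => sq_nonneg _
  refine ⟨∑ x, ∑ y, f x * f (x + y) * h (x + y ^ 2), ?_, ?_⟩
  · refine (nl_E hF f h h0).trans ?_
    rw [f2]
    calc _ ≤ 12 * q * (#A : ℝ) ^ 4 * (#A : ℝ) ^ 2 := by gcongr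
      _ = _ := by ring
  · have m1 : ∑ x, ∑ y, f x * f (x + y) * δ = (#A : ℝ) ^ 3 / q := by
      simp_rw [← Finset.sum_mul, ← Finset.mul_sum]
      have : ∀ x, ∑ y, f (x + y) = #A := fun x => by
        rw [← f1]; exact Fintype.sum_equiv (Equiv.addLeft x) _ _ (fun _ => rfl)
      simp_rw [this]
      rw [← Finset.sum_mul, f1, hδ]; ring
    rw [← m1, ← Finset.sum_add_distrib]
    simp_rw [← Finset.sum_add_distrib]
    rw [Finset.card_filter]
    push_cast
    rw [Fintype.sum_prod_type]
    refine Finset.sum_congr rfl fun x _ => Finset.sum_congr rfl fun y _ => ?_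
    simp only [hh, hf]
    by_cases a1 : x ∈ A <;> by_cases a2 : x + y ∈ A <;> by_cases a3 : x + y ^ 2 ∈ A <;>
      simp [a1, a2, a3]

end nlr

theorem stmt2 : ∃ c : ℝ, 0 < c ∧ ∀ (p : ℕ) [NeZero p], p.Prime → p ≠ 2 →
    ∀ A : Finset (ZMod p),
    (((Finset.univ.filter (fun xy : ZMod p × ZMod p =>
        xy.1 ∈ A ∧ xy.1 + xy.2 ∈ A ∧ xy.1 + xy.2 ^ 2 ∈ A)).card : ℝ)) ≥
      (((A.card : ℝ) / p) ^ 3 -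
        c * (p : ℝ) ^ (-(1 / 10 : ℝ)) * ((A.card : ℝ) / p) ^ ((3 : ℝ) / 2)) * (p : ℝ) ^ 2 := by
  refine ⟨2, by norm_num, ?_⟩
  intro p _ hp h2 A
  haveI : Fact p.Prime := ⟨hp⟩
  have hF : ringChar (ZMod p) ≠ 2 := by rwa [ZMod.ringChar_zmod_n]
  obtain ⟨E, hE, hN⟩ := nl_main hF A
  rw [ZMod.card] at hE hN
  have hN' : (((Finset.univ.filter (fun xy : ZMod p × ZMod p =>
        xy.1 ∈ A ∧ xy.1 + xy.2 ∈ A ∧ xy.1 + xy.2 ^ 2 ∈ A)).card : ℝ)) = (#A : ℝ) ^ 3 / p + E := by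
    rw [← hN]
  rw [hN']
  have p0 : (0:ℝ) < p := by exact_mod_cast hp.pos
  have p1 : (1:ℝ) ≤ p := by exact_mod_cast hp.one_le
  have a0 : (0:ℝ) ≤ #A := by positivity
  set B : ℝ := 2 * (p : ℝ) ^ (-(1 / 10 : ℝ)) * ((A.card : ℝ) / p) ^ ((3 : ℝ) / 2) * (p : ℝ) ^ 2 with hB
  have B0 : 0 ≤ B := by positivity
  have k1 : (((A.card : ℝ) / p) ^ ((3 : ℝ) / 2)) ^ 4 = ((A.card : ℝ) / p) ^ 6 := by
    rw [← Real.rpow_natCast, ← Real.rpow_mul (by positivity), ← Real.rpow_natCast]; norm_num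
  have k2 : (p : ℝ) ^ (-1 : ℝ) ≤ ((p : ℝ) ^ (-(1 / 10 : ℝ))) ^ 4 := by
    rw [← Real.rpow_natCast, ← Real.rpow_mul p0.le]
    apply Real.rpow_le_rpow_of_exponent_le p1
    norm_num
  have hB4 : E ^ 4 ≤ B ^ 4 := by
    calc E ^ 4 ≤ 16 * p * (#A : ℝ) ^ 6 := hE.trans (by gcongr; norm_num)
      _ = 16 * (p : ℝ) ^ (-1 : ℝ) * ((A.card : ℝ) / p) ^ 6 * (p : ℝ) ^ 8 := by
        rw [Real.rpow_neg_one]; field_simp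
      _ ≤ 16 * ((p : ℝ) ^ (-(1 / 10 : ℝ))) ^ 4 * ((A.card : ℝ) / p) ^ 6 * (p : ℝ) ^ 8 := by gcongr
      _ = B ^ 4 := by rw [hB, ← k1]; ring
  have hle : |E| ≤ B := by
    refine le_of_pow_le_pow_left₀ (n := 4) (by norm_num) B0 ?_
    rwa [Even.pow_abs (by decide)]
  have := (abs_le.1 hle).1
  have e : (((A.card : ℝ) / p) ^ 3 -
        2 * (p : ℝ) ^ (-(1 / 10 : ℝ)) * ((A.card : ℝ) / p) ^ ((3 : ℝ) / 2)) * (p : ℝ) ^ 2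
      = (#A : ℝ) ^ 3 / p - B := by
    rw [sub_mul, hB]; field_simp
  rw [e]
  linarith
end
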